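/- arXiv:2511.15742 — 4 statements merged into one kernel-verified Lean document; each statement's English description precedes it below -/
import Mathlib

section
/- Let π be a permutation of Fin n such that c(π k) · q(π k') ≤ c(π k') · q(π k) whenever k ≤ k' (i.e., the ratios c/q are nondecreasing along π). Then for every permutation σ of Fin n, EC_∧(π) ≤ EC_∧(σ), where EC_∧(ρ) = Σ_{k=0}^{n-1} c(ρ k) · Π_{j=0}^{k-1} p(ρ j). That is, testing in nondecreasing order of c_i/q_i minimizes the expected cost of nonadaptively evaluating the series function. -/
/-- Expected cost of the nonadaptive strategy testing in order `ρ` for the series (AND)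
function: `EC_∧(ρ) = ∑_{k=0}^{n-1} c (ρ k) · ∏_{j<k} p (ρ j)`. -/
noncomputable def ECand {n : ℕ} (c p : Fin n → ℝ) (ρ : Equiv.Perm (Fin n)) : ℝ :=
  ∑ k : Fin n, c (ρ k) * ∏ j ∈ Finset.univ.filter (fun j => j < k), p (ρ j)

/-!
The cost of a sequence of tests satisfies `cost (a :: l) = c a + p a * cost l`. Exchanging two
adjacent tests `a, b` leaves the coefficient `p a * p b` of the remaining cost unchanged, so the
comparison of the two orders is exactly the comparison of the ratios `c / (1 - p)`. Hence a test of
minimal ratio can be moved to the front past one neighbour at a time without increasing the cost,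
and repeating this with the remaining tests turns any order into the ratio order.
-/

variable {ι R : Type*}

/-- Expected cost of performing the tests of a list one after the other until one of them fails:
the first test is always paid for, the others only if it succeeds. Lists replace functions on
`Fin n` because they make it easy to move a test past its neighbours. -/
def seriesCost [Semiring R] (c p : ι → R) : List ι → R
  | [] => 0
  | i :: l => c i + p i * seriesCost c p l

/-- The comparison `c i / (1 - p i) ≤ c j / (1 - p j)` of cost-to-failure ratios, cross-multiplied
so that it involves no division. It is not transitive once `p ≥ 1` is allowed, so a list is called
sorted when all its pairs, not only the adjacent ones, are in this relation. -/
def RatioLE [Ring R] [LE R] (c p : ι → R) (i j : ι) : Prop :=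
  c i * (1 - p j) ≤ c j * (1 - p i)

section Semiring

variable [Semiring R] {c p : ι → R}

@[simp]
lemma seriesCost_nil : seriesCost c p [] = 0 := rfl

@[simp]
lemma seriesCost_cons (i : ι) (l : List ι) :
    seriesCost c p (i :: l) = c i + p i * seriesCost c p l := rfl

lemma seriesCost_cons_le_cons [PartialOrder R] [IsOrderedRing R] {i : ι} {l l' : List ι}
    (hi : 0 ≤ p i) (h : seriesCost c p l ≤ seriesCost c p l') :
    seriesCost c p (i :: l) ≤ seriesCost c p (i :: l') := by
  simp only [seriesCost_cons]
  gcongr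

end Semiring

lemma seriesCost_ofFn [CommSemiring R] (c p : ι → R) {n : ℕ} (f : Fin n → ι) :
    seriesCost c p (List.ofFn f) = ∑ k, c (f k) * ∏ j with j < k, p (f j) := by
  induction n with
  | zero => simp
  | succ n ih =>
    have prod_lt_succ (k : Fin n) :
        ∏ j with j < k.succ, p (f j) = p (f 0) * ∏ j with j < k, p (f j.succ) := by
      simp [Finset.prod_filter, Fin.prod_univ_succ]
    simp [List.ofFn_succ, ih, Fin.sum_univ_succ, prod_lt_succ, Finset.mul_sum, mul_left_comm]

section OrderedRing

variable [CommRing R] [PartialOrder R] [IsOrderedRing R] {c p : ι → R}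

lemma seriesCost_cons_cons_le_swap_iff {i j : ι} {l : List ι} :
    seriesCost c p (i :: j :: l) ≤ seriesCost c p (j :: i :: l) ↔ RatioLE c p i j := by
  have gain : seriesCost c p (j :: i :: l) - seriesCost c p (i :: j :: l) =
      c j * (1 - p i) - c i * (1 - p j) := by
    simp only [seriesCost_cons]
    ring
  rw [RatioLE, ← sub_nonneg, gain, sub_nonneg]

lemma seriesCost_cons_append_le_append_cons (hp : ∀ i, 0 ≤ p i) {i : ι} {u : List ι}
    (hu : ∀ j ∈ u, RatioLE c p i j) (v : List ι) :
    seriesCost c p (i :: (u ++ v)) ≤ seriesCost c p (u ++ i :: v) := by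
  induction u with
  | nil => exact le_rfl
  | cons j u ih =>
    obtain ⟨hj, hu⟩ := List.forall_mem_cons.1 hu
    calc seriesCost c p (i :: j :: (u ++ v))
        ≤ seriesCost c p (j :: i :: (u ++ v)) := seriesCost_cons_cons_le_swap_iff.2 hj
      _ ≤ seriesCost c p (j :: (u ++ i :: v)) := seriesCost_cons_le_cons (hp j) (ih hu)

theorem seriesCost_le_of_pairwise_of_perm (hp : ∀ i, 0 ≤ p i) {l l' : List ι}
    (hl : l.Pairwise (RatioLE c p)) (h : l.Perm l') :
    seriesCost c p l ≤ seriesCost c p l' := by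
  induction l generalizing l' with
  | nil => rw [h.nil_eq]
  | cons i l ih =>
    obtain ⟨hi, hl⟩ := List.pairwise_cons.1 hl
    obtain ⟨u, v, rfl⟩ := List.append_of_mem (h.subset List.mem_cons_self)
    have h_tail : l.Perm (u ++ v) := (h.trans List.perm_middle).cons_inv
    have hu : ∀ j ∈ u, RatioLE c p i j := fun j hj =>
      hi j (h_tail.mem_iff.2 (List.mem_append_left v hj))
    calc seriesCost c p (i :: l)
        ≤ seriesCost c p (i :: (u ++ v)) := seriesCost_cons_le_cons (hp i) (ih hl h_tail)
      _ ≤ seriesCost c p (u ++ i :: v) := seriesCost_cons_append_le_append_cons hp hu v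

theorem series_ratio_order_optimal_general {n : ℕ} (hp : ∀ i, 0 ≤ p i) (π : Fin n ≃ ι)
    (hπ : ∀ k k', k < k' → c (π k) * (1 - p (π k')) ≤ c (π k') * (1 - p (π k)))
    (σ : Fin n ≃ ι) :
    ∑ k, c (π k) * ∏ j with j < k, p (π j) ≤ ∑ k, c (σ k) * ∏ j with j < k, p (σ j) := by
  have ratio_sorted : (List.ofFn π).Pairwise (RatioLE c p) :=
    List.pairwise_ofFn.2 fun k k' => hπ k k'
  have rearrangement : (List.ofFn π).Perm (List.ofFn σ) := by
    simpa [Function.comp_def] using Equiv.Perm.ofFn_comp_perm (π.trans σ.symm) σ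
  simpa only [seriesCost_ofFn] using
    seriesCost_le_of_pairwise_of_perm hp ratio_sorted rearrangement

end OrderedRing

/-- Testing in nondecreasing order of `c i / q i` (with `q i = 1 - p i`) minimizes the
expected cost of nonadaptively evaluating the series (AND) function. -/
theorem series_ratio_order_optimal {n : ℕ} (hn : 0 < n) (c p : Fin n → ℝ)
    (hc : ∀ i, 0 < c i) (hp : ∀ i, 0 < p i ∧ p i < 1) (π : Equiv.Perm (Fin n))
    (hπ : ∀ k k' : Fin n, k ≤ k' →
      c (π k) * (1 - p (π k')) ≤ c (π k') * (1 - p (π k))) :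
    ∀ σ : Equiv.Perm (Fin n), ECand c p π ≤ ECand c p σ :=
  series_ratio_order_optimal_general (fun i => (hp i).1.le) π fun k k' h => hπ k k' h.le
end

section
/- Let σ be a permutation of Fin n and let k be an index with k + 1 < n. Let σ' be the permutation obtained from σ by swapping the tests in positions k and k+1 (i.e., σ' = σ ∘ (swap k (k+1))). Then EC_∧(σ) − EC_∧(σ') = (Π_{j=0}^{k-1} p(σ j)) · (c(σ k) · q(σ (k+1)) − c(σ (k+1)) · q(σ k)). In particular, EC_∧(σ) ≤ EC_∧(σ') if and only if c(σ k) · q(σ (k+1)) ≤ c(σ (k+1)) · q(σ k). -/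
section PrefixProducts

variable {α M : Type*} [CommMonoid M]

theorem prod_comp_swap_of_mem_iff [DecidableEq α] {s : Finset α} {a b : α} (h : a ∈ s ↔ b ∈ s)
    (f : α → M) : ∏ x ∈ s, f (Equiv.swap a b x) = ∏ x ∈ s, f x := by
  have hbij : Set.BijOn (Equiv.swap a b) s s := Equiv.swap_bijOn_self h
  exact Finset.prod_nbij (Equiv.swap a b) hbij.mapsTo hbij.injOn hbij.surjOn fun _ _ => rfl

variable [LinearOrder α] [LocallyFiniteOrderBot α] {k l : α}

theorem prod_Iio_comp_swap_of_covBy (h : k ⋖ l) {i : α} (hi : i ≠ l) (f : α → M) :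
    ∏ j ∈ Finset.Iio i, f (Equiv.swap k l j) = ∏ j ∈ Finset.Iio i, f j := by
  have hmem : k < i ↔ l < i := ⟨fun hki => (h.ge_of_gt hki).lt_of_ne' hi, h.lt.trans⟩
  exact prod_comp_swap_of_mem_iff (by simpa only [Finset.mem_Iio] using hmem) f

theorem prod_Iio_of_covBy (h : k ⋖ l) (f : α → M) :
    ∏ j ∈ Finset.Iio l, f j = (∏ j ∈ Finset.Iio k, f j) * f k := by
  have hIio : Finset.Iio l = Finset.Iic k := by
    ext j
    simp only [Finset.mem_Iio, Finset.mem_Iic, h.lt_iff_le_left]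
  rw [hIio, Finset.prod_Iio_mul_eq_prod_Iic]

end PrefixProducts

section ExpectedCost

variable {ι R : Type*} [LinearOrder ι] [LocallyFiniteOrderBot ι] [Fintype ι]

/-- The expected cost of evaluating a conjunction by running independent tests in the order of the
positions `ι` until one fails. Here `c i` and `p i` are the cost and the success probability of the
test at position `i`, so a reordering of the tests is a precomposition of both `c` and `p`. -/
def seriesExpectedCost [CommSemiring R] (c p : ι → R) : R :=
  ∑ i, c i * ∏ j ∈ Finset.Iio i, p j

theorem seriesExpectedCost_sub_comp_swap [CommRing R] (c p : ι → R) {k l : ι} (h : k ⋖ l) :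
    seriesExpectedCost c p - seriesExpectedCost (c ∘ Equiv.swap k l) (p ∘ Equiv.swap k l)
      = (∏ j ∈ Finset.Iio k, p j) * (c k * (1 - p l) - c l * (1 - p k)) := by
  have prefix_swap {i : ι} (hi : i ≠ l) :
      ∏ j ∈ Finset.Iio i, (p ∘ Equiv.swap k l) j = ∏ j ∈ Finset.Iio i, p j :=
    prod_Iio_comp_swap_of_covBy h hi p
  have prefix_l : ∏ j ∈ Finset.Iio l, p j = (∏ j ∈ Finset.Iio k, p j) * p k :=
    prod_Iio_of_covBy h p
  have prefix_swap_l :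
      ∏ j ∈ Finset.Iio l, (p ∘ Equiv.swap k l) j = (∏ j ∈ Finset.Iio k, p j) * p l := by
    rw [prod_Iio_of_covBy h, prefix_swap h.ne, Function.comp_apply, Equiv.swap_apply_left]
  unfold seriesExpectedCost
  rw [← Finset.sum_sub_distrib, Fintype.sum_eq_add k l h.ne]
  · rw [prefix_swap h.ne, prefix_l, prefix_swap_l]
    simp only [Function.comp_apply, Equiv.swap_apply_left, Equiv.swap_apply_right]
    ring
  · rintro i ⟨hik, hil⟩
    rw [prefix_swap hil, Function.comp_apply, Equiv.swap_apply_of_ne_of_ne hik hil, sub_self]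

theorem series_adjacent_swap_general [CommRing R] [LinearOrder R] [IsStrictOrderedRing R]
    (c p : ι → R) {k l : ι} (h : k ⋖ l) (hp : ∀ j < k, 0 < p j) :
    seriesExpectedCost c p - seriesExpectedCost (c ∘ Equiv.swap k l) (p ∘ Equiv.swap k l)
        = (∏ j ∈ Finset.Iio k, p j) * (c k * (1 - p l) - c l * (1 - p k)) ∧
    (seriesExpectedCost c p ≤ seriesExpectedCost (c ∘ Equiv.swap k l) (p ∘ Equiv.swap k l) ↔
      c k * (1 - p l) ≤ c l * (1 - p k)) := by
  have hdiff := seriesExpectedCost_sub_comp_swap c p h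
  have hpos : 0 < ∏ j ∈ Finset.Iio k, p j :=
    Finset.prod_pos fun j hj => hp j (Finset.mem_Iio.mp hj)
  refine ⟨hdiff, ?_⟩
  rw [← sub_nonpos, hdiff, mul_sub, sub_nonpos, mul_le_mul_iff_right₀ hpos]

end ExpectedCost

theorem ECand_eq_seriesExpectedCost {n : ℕ} (c p : Fin n → ℝ) (ρ : Equiv.Perm (Fin n)) :
    ECand c p ρ = seriesExpectedCost (c ∘ ρ) (p ∘ ρ) := by
  simp only [ECand, seriesExpectedCost, Finset.filter_gt_eq_Iio, Function.comp_apply]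

/-- Exchange lemma for adjacent transpositions: swapping the tests in positions `k` and
`k+1` of the permutation `σ` changes the expected cost of the series (AND) strategy by
`(∏_{j<k} p (σ j)) · (c (σ k) · q (σ (k+1)) − c (σ (k+1)) · q (σ k))`; in particular
`EC_∧(σ) ≤ EC_∧(σ')` iff `c (σ k) · q (σ (k+1)) ≤ c (σ (k+1)) · q (σ k)`. -/
theorem series_adjacent_swap {n : ℕ} (c p : Fin n → ℝ)
    (hc : ∀ i, 0 < c i) (hp : ∀ i, 0 < p i ∧ p i < 1)
    (σ : Equiv.Perm (Fin n)) (k : Fin n) (hk : (k : ℕ) + 1 < n) :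
    ECand c p σ - ECand c p (σ * Equiv.swap k ⟨(k : ℕ) + 1, hk⟩)
        = (∏ j ∈ Finset.univ.filter (fun j => j < k), p (σ j)) *
          (c (σ k) * (1 - p (σ ⟨(k : ℕ) + 1, hk⟩))
            - c (σ ⟨(k : ℕ) + 1, hk⟩) * (1 - p (σ k))) ∧
    (ECand c p σ ≤ ECand c p (σ * Equiv.swap k ⟨(k : ℕ) + 1, hk⟩) ↔
      c (σ k) * (1 - p (σ ⟨(k : ℕ) + 1, hk⟩))
        ≤ c (σ ⟨(k : ℕ) + 1, hk⟩) * (1 - p (σ k))) := by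
  have hcov : k ⋖ ⟨(k : ℕ) + 1, hk⟩ := Fin.covBy_iff.mpr (Nat.covBy_iff_add_one_eq.mpr rfl)
  simp only [ECand_eq_seriesExpectedCost, Finset.filter_gt_eq_Iio]
  exact series_adjacent_swap_general (c ∘ σ) (p ∘ σ) hcov fun j _ => (hp (σ j)).1
end

section
/- Let π be a permutation of Fin n such that c(π k) · p(π k') ≤ c(π k') · p(π k) whenever k ≤ k' (i.e., the ratios c/p are nondecreasing along π). Then for every permutation σ of Fin n, EC_∨(π) ≤ EC_∨(σ), where EC_∨(ρ) = Σ_{k=0}^{n-1} c(ρ k) · Π_{j=0}^{k-1} q(ρ j). That is, testing in nondecreasing order of c_i/p_i minimizes the expected cost of nonadaptively evaluating the parallel function. -/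
/-!
Exchange argument. Conditioning on the first test, an order `a :: l` costs
`c a + (1 - p a) * cost l`. Performing two adjacent tests in the order `b, a` instead of `a, b`
therefore changes the cost by `c b * p a - c a * p b`, times the probability of reaching them, so
a test of least ratio `c / p` can be bubbled to the front of any order without increasing the
cost. Once two orders agree on the first test, it can be removed from both.
-/

/-- Expected cost of the nonadaptive strategy testing in order `ρ` for the parallel (OR)
function: `EC_∨(ρ) = ∑_{k=0}^{n-1} c (ρ k) · ∏_{j<k} q (ρ j)` where `q i = 1 - p i`. -/
noncomputable def ECor {n : ℕ} (c p : Fin n → ℝ) (ρ : Equiv.Perm (Fin n)) : ℝ :=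
  ∑ k : Fin n, c (ρ k) * ∏ j ∈ Finset.univ.filter (fun j => j < k), (1 - p (ρ j))

section ExpectedCost

variable {ι R : Type*} [CommRing R]

/-- Expected cost of performing the tests of a list in order until the first success, by
conditioning on the first test. Lists, unlike permutations, allow a test to be removed. -/
def expectedCost (c p : ι → R) : List ι → R
  | [] => 0
  | a :: l => c a + (1 - p a) * expectedCost c p l

theorem expectedCost_ofFn (c p : ι → R) {n : ℕ} (f : Fin n → ι) :
    expectedCost c p (List.ofFn f) = ∑ k, c (f k) * ∏ j with j < k, (1 - p (f j)) := by
  induction n with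
  | zero => simp [expectedCost]
  | succ n ih =>
    have prod_lt_succ (k : Fin n) : ∏ j with j < k.succ, (1 - p (f j)) =
        (1 - p (f 0)) * ∏ j with j < k, (1 - p (f j.succ)) := by
      simp [Finset.prod_filter, Fin.prod_univ_succ]
    rw [List.ofFn_succ, expectedCost, ih, Fin.sum_univ_succ, Finset.mul_sum]
    simp [prod_lt_succ, mul_left_comm]

variable [PartialOrder R] [IsOrderedRing R] {c p : ι → R}

theorem expectedCost_cons_le_cons {a : ι} {l l' : List ι} (ha : p a ≤ 1)
    (h : expectedCost c p l ≤ expectedCost c p l') :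
    expectedCost c p (a :: l) ≤ expectedCost c p (a :: l') :=
  add_le_add_right (mul_le_mul_of_nonneg_left h (sub_nonneg.2 ha)) (c a)

theorem expectedCost_cons_cons_le_swap_iff {a b : ι} {l : List ι} :
    expectedCost c p (a :: b :: l) ≤ expectedCost c p (b :: a :: l) ↔
      c a * p b ≤ c b * p a := by
  have swap_sub : expectedCost c p (b :: a :: l) - expectedCost c p (a :: b :: l) =
      c b * p a - c a * p b := by
    simp only [expectedCost]
    ring
  rw [← sub_nonneg, swap_sub, sub_nonneg]

theorem expectedCost_cons_append_le_middle {a : ι} {s t : List ι} (hp : ∀ b ∈ s, p b ≤ 1)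
    (hs : ∀ b ∈ s, c a * p b ≤ c b * p a) :
    expectedCost c p (a :: (s ++ t)) ≤ expectedCost c p (s ++ a :: t) := by
  induction s with
  | nil => exact le_rfl
  | cons b s ih =>
    obtain ⟨hpb, hp⟩ := List.forall_mem_cons.1 hp
    obtain ⟨hab, hs⟩ := List.forall_mem_cons.1 hs
    calc expectedCost c p (a :: b :: (s ++ t))
        ≤ expectedCost c p (b :: a :: (s ++ t)) := expectedCost_cons_cons_le_swap_iff.2 hab
      _ ≤ expectedCost c p (b :: (s ++ a :: t)) := expectedCost_cons_le_cons hpb (ih hp hs)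

theorem expectedCost_le_of_pairwise_of_perm {l l' : List ι} (hp : ∀ a ∈ l, p a ≤ 1)
    (hl : l.Pairwise fun a b => c a * p b ≤ c b * p a) (h : l.Perm l') :
    expectedCost c p l ≤ expectedCost c p l' := by
  induction hl generalizing l' with
  | nil => rw [h.nil_eq]
  | @cons a l ha _ ih =>
    obtain ⟨s, t, rfl⟩ := List.append_of_mem (h.subset List.mem_cons_self)
    have hperm : l.Perm (s ++ t) := (h.trans List.perm_middle).cons_inv
    have mem_of_mem_left {b : ι} (hb : b ∈ s) : b ∈ l :=
      hperm.symm.subset (List.mem_append_left t hb)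
    obtain ⟨hpa, hp⟩ := List.forall_mem_cons.1 hp
    calc expectedCost c p (a :: l)
        ≤ expectedCost c p (a :: (s ++ t)) := expectedCost_cons_le_cons hpa (ih hp hperm)
      _ ≤ expectedCost c p (s ++ a :: t) :=
        expectedCost_cons_append_le_middle (fun b hb => hp b (mem_of_mem_left hb))
          fun b hb => ha b (mem_of_mem_left hb)

theorem parallel_ratio_order_optimal_general {n : ℕ} (hp : ∀ i, p i ≤ 1) (π σ : Fin n ≃ ι)
    (hπ : ∀ k k', k < k' → c (π k) * p (π k') ≤ c (π k') * p (π k)) :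
    ∑ k, c (π k) * ∏ j with j < k, (1 - p (π j)) ≤
      ∑ k, c (σ k) * ∏ j with j < k, (1 - p (σ j)) := by
  have hperm : (List.ofFn π).Perm (List.ofFn σ) := by
    simpa [Function.comp_def] using Equiv.Perm.ofFn_comp_perm (π.trans σ.symm) σ
  rw [← expectedCost_ofFn, ← expectedCost_ofFn]
  exact expectedCost_le_of_pairwise_of_perm (fun i _ => hp i)
    (List.pairwise_ofFn.2 fun k k' => hπ k k') hperm

end ExpectedCost

/-- Testing in nondecreasing order of `c i / p i` minimizes the expected cost of
nonadaptively evaluating the parallel (OR) function. -/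
theorem parallel_ratio_order_optimal {n : ℕ} (hn : 0 < n) (c p : Fin n → ℝ)
    (hc : ∀ i, 0 < c i) (hp : ∀ i, 0 < p i ∧ p i < 1) (π : Equiv.Perm (Fin n))
    (hπ : ∀ k k' : Fin n, k ≤ k' →
      c (π k) * p (π k') ≤ c (π k') * p (π k)) :
    ∀ σ : Equiv.Perm (Fin n), ECor c p π ≤ ECor c p σ :=
  fun σ => parallel_ratio_order_optimal_general (fun i => (hp i).2.le) π σ
    fun k k' h => hπ k k' h.le
end

section
/- Adaptivity does not help for the series function: let T be any binary decision tree over variables Fin n in which no variable is queried twice along any root-to-leaf path, and which correctly computes the series (AND) function f(x) = ⋀_i x i. Define the expected cost of a tree recursively by EC(leaf) = 0 and EC(node i T₀ T₁) = c i + q i · EC(T₀) + p i · EC(T₁). Then EC(T) ≥ Σ_{k=0}^{n-1} c(π k) · Π_{j=0}^{k-1} p(π j) for any permutation π of Fin n with c(π k) · q(π k') ≤ c(π k') · q(π k) whenever k ≤ k' (i.e., π sorts the variables by nondecreasing c_i/q_i). -/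
/-- Binary decision trees over variables `Fin n`: a leaf carries a Boolean label, and an
internal node carries a variable index together with a false-subtree and a true-subtree. -/
inductive BDT (n : ℕ) where
  | leaf (b : Bool)
  | node (i : Fin n) (t0 t1 : BDT n)

/-- The label of the leaf reached by following the tree on input `x` (descending into the
true-subtree at a node querying `i` when `x i = true`, into the false-subtree otherwise). -/
def BDT.follow {n : ℕ} : BDT n → (Fin n → Bool) → Bool
  | .leaf b, _ => b
  | .node i t0 t1, x => if x i then t1.follow x else t0.follow x

/-- The set of variables appearing in a binary decision tree. -/
def BDT.vars {n : ℕ} : BDT n → Finset (Fin n)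
  | .leaf _ => ∅
  | .node i t0 t1 => insert i (t0.vars ∪ t1.vars)

/-- No variable is queried twice along any root-to-leaf path of the tree. -/
def BDT.noRepeats {n : ℕ} : BDT n → Prop
  | .leaf _ => True
  | .node i t0 t1 => i ∉ t0.vars ∧ i ∉ t1.vars ∧ t0.noRepeats ∧ t1.noRepeats

/-- Expected cost of a binary decision tree:
`EC(leaf) = 0`, `EC(node i T₀ T₁) = c i + q i · EC(T₀) + p i · EC(T₁)` with `q i = 1 - p i`. -/
noncomputable def BDT.expCost {n : ℕ} (c p : Fin n → ℝ) : BDT n → ℝ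
  | .leaf _ => 0
  | .node i t0 t1 => c i + (1 - p i) * (t0.expCost c p) + p i * (t1.expCost c p)

/-!
Fix an input `x` at which flipping any single variable changes the answer, such as the all-true
input for AND. The path followed on `x` must then query every variable, and discarding the cost of
all subtrees hanging off this path leaves the cost of a fixed testing order, stopped at the first
outcome that deviates from `x`. Among fixed orders an adjacent interchange argument (Smith's rule)
settles the matter: with `i` tested just before `j` the two tests contribute `c i + p i * c j`, with
the order reversed `c j + p j * c i`, and the former is at most the latter exactly when
`c i * (1 - p j) ≤ c j * (1 - p i)`.
-/

section SequentialCost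

variable {ι R : Type*}

/-- Expected cost of performing the tests of a list in order, with costs `c` and independent success
probabilities `p`, until the first failure. -/
def sequentialCost [Semiring R] (c p : ι → R) : List ι → R
  | [] => 0
  | i :: l => c i + p i * sequentialCost c p l

theorem sum_mul_prod_lt_eq_sequentialCost_ofFn [CommSemiring R] (c p : ι → R) {n : ℕ}
    (f : Fin n → ι) :
    ∑ k, c (f k) * ∏ j with j < k, p (f j) = sequentialCost c p (List.ofFn f) := by
  induction n with
  | zero => simp [sequentialCost]
  | succ n ih =>
    rw [List.ofFn_succ, sequentialCost, ← ih fun k => f k.succ, Fin.sum_univ_succ, Finset.mul_sum]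
    simp [Finset.prod_filter, Fin.prod_univ_succ, mul_left_comm]

variable [CommRing R] [PartialOrder R] [IsOrderedRing R] {c p : ι → R}

theorem sequentialCost_append_cons_le (hp : ∀ i, 0 ≤ p i) {i : ι} {l₁ : List ι} (l₂ : List ι)
    (hi : ∀ j ∈ l₁, c j * (1 - p i) ≤ c i * (1 - p j)) :
    sequentialCost c p (l₁ ++ i :: l₂) ≤ sequentialCost c p (i :: (l₁ ++ l₂)) := by
  induction l₁ with
  | nil => exact le_rfl
  | cons j l₁ ih =>
    obtain ⟨hji, hi⟩ := List.forall_mem_cons.1 hi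
    have hmove := mul_le_mul_of_nonneg_left (ih hi) (hp j)
    simp only [List.cons_append, sequentialCost] at hmove ⊢
    linear_combination hmove + hji

theorem sequentialCost_le_of_perm (hp : ∀ i, 0 ≤ p i) {l l' : List ι}
    (hl : l.Pairwise fun i j => c i * (1 - p j) ≤ c j * (1 - p i)) (hperm : l.Perm l') :
    sequentialCost c p l ≤ sequentialCost c p l' := by
  induction l' generalizing l with
  | nil => rw [hperm.eq_nil]
  | cons i t ih =>
    obtain ⟨l₁, l₂, rfl⟩ := List.append_of_mem (hperm.mem_iff.2 List.mem_cons_self)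
    have hrest : (l₁ ++ l₂).Perm t := (List.perm_middle.symm.trans hperm).cons_inv
    have hsorted := hl.sublist ((List.sublist_cons_self i l₂).append_left l₁)
    calc sequentialCost c p (l₁ ++ i :: l₂)
        ≤ c i + p i * sequentialCost c p (l₁ ++ l₂) :=
          sequentialCost_append_cons_le hp l₂ fun j hj =>
            (List.pairwise_append.1 hl).2.2 j hj i List.mem_cons_self
      _ ≤ c i + p i * sequentialCost c p t := by
          gcongr
          · exact hp i
          · exact ih hsorted hrest

end SequentialCost

/-- The probability that test `i` has outcome `x i`, where `p i` is its success probability. With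
`outcomeProb p x` in place of `p`, a `sequentialCost` is that of testing until the first outcome
that deviates from `x`. -/
def outcomeProb {ι : Type*} (p : ι → ℝ) (x : ι → Bool) (i : ι) : ℝ :=
  bif x i then p i else 1 - p i

theorem outcomeProb_nonneg {ι : Type*} {p : ι → ℝ} {i : ι} (hp : p i ∈ Set.Icc 0 1)
    (x : ι → Bool) : 0 ≤ outcomeProb p x i := by
  cases hx : x i <;> simp [outcomeProb, hx, hp.1, hp.2]

namespace BDT

variable {n : ℕ} {c p : Fin n → ℝ} {T : BDT n} {x : Fin n → Bool}

/-- The variables queried on input `x`, in the order in which they are queried. -/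
def path (x : Fin n → Bool) : BDT n → List (Fin n)
  | leaf _ => []
  | node i t₀ t₁ => i :: if x i then t₁.path x else t₀.path x

theorem mem_vars_of_mem_path {i : Fin n} (hi : i ∈ T.path x) : i ∈ T.vars := by
  induction T with
  | leaf _ => simp [path] at hi
  | node j t₀ t₁ ih₀ ih₁ => grind [path, vars]

theorem noRepeats.nodup_path (hT : T.noRepeats) (x : Fin n → Bool) : (T.path x).Nodup := by
  induction T with
  | leaf _ => exact List.nodup_nil
  | node i t₀ t₁ ih₀ ih₁ =>
    obtain ⟨hi₀, hi₁, hT₀, hT₁⟩ := hT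
    rw [path, List.nodup_cons]
    split_ifs
    · exact ⟨mt mem_vars_of_mem_path hi₁, ih₁ hT₁⟩
    · exact ⟨mt mem_vars_of_mem_path hi₀, ih₀ hT₀⟩

theorem follow_congr {y : Fin n → Bool} (h : ∀ i ∈ T.path x, y i = x i) :
    T.follow y = T.follow x := by
  induction T with
  | leaf _ => rfl
  | node i t₀ t₁ ih₀ ih₁ =>
    obtain ⟨hi, h⟩ := List.forall_mem_cons.1 h
    rw [follow, follow, hi]
    split_ifs with hx
    · exact ih₁ (by simpa only [if_pos hx] using h)
    · exact ih₀ (by simpa only [if_neg hx] using h)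

theorem mem_path_of_follow_update_ne {i : Fin n} {b : Bool}
    (h : T.follow (Function.update x i b) ≠ T.follow x) : i ∈ T.path x := by
  by_contra hi
  exact h (follow_congr fun j hj => Function.update_of_ne (ne_of_mem_of_not_mem hj hi) b x)

theorem expCost_nonneg (hc : ∀ i, 0 ≤ c i) (hp : ∀ i, p i ∈ Set.Icc 0 1) (T : BDT n) :
    0 ≤ T.expCost c p := by
  induction T with
  | leaf _ => exact le_rfl
  | node i t₀ t₁ ih₀ ih₁ =>
    have hq := sub_nonneg.2 (hp i).2
    exact add_nonneg (add_nonneg (hc i) (mul_nonneg hq ih₀)) (mul_nonneg (hp i).1 ih₁)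

theorem sequentialCost_path_le_expCost (hc : ∀ i, 0 ≤ c i) (hp : ∀ i, p i ∈ Set.Icc 0 1)
    (T : BDT n) (x : Fin n → Bool) :
    sequentialCost c (outcomeProb p x) (T.path x) ≤ T.expCost c p := by
  induction T with
  | leaf _ => exact le_rfl
  | node i t₀ t₁ ih₀ ih₁ =>
    have hq := sub_nonneg.2 (hp i).2
    cases hx : x i <;>
      simp only [path, sequentialCost, outcomeProb, expCost, hx, cond_true, cond_false, if_true,
        Bool.false_eq_true, if_false]
    case false =>
      linarith [mul_le_mul_of_nonneg_left ih₀ hq, mul_nonneg (hp i).1 (expCost_nonneg hc hp t₁)]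
    case true =>
      linarith [mul_le_mul_of_nonneg_left ih₁ (hp i).1, mul_nonneg hq (expCost_nonneg hc hp t₀)]

end BDT

/-- For `x` constantly true this bounds trees computing AND, for `x` constantly false trees
computing OR, and for every `x` trees computing parity. -/
theorem series_adaptivity_does_not_help_general {n : ℕ} {c p : Fin n → ℝ}
    (hc : ∀ i, 0 ≤ c i) (hp : ∀ i, p i ∈ Set.Icc 0 1) {T : BDT n} (x : Fin n → Bool)
    (hrep : (T.path x).Nodup)
    (hT : ∀ i, T.follow (Function.update x i (!x i)) ≠ T.follow x)
    {π : Equiv.Perm (Fin n)}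
    (hπ : ∀ k k', k ≤ k' →
      c (π k) * (1 - outcomeProb p x (π k')) ≤ c (π k') * (1 - outcomeProb p x (π k))) :
    ECand c (outcomeProb p x) π ≤ T.expCost c p := by
  have hperm : (List.ofFn π).Perm (T.path x) :=
    (List.perm_ext_iff_of_nodup (List.nodup_ofFn.2 π.injective) hrep).2 fun i =>
      iff_of_true (List.mem_ofFn.2 (π.surjective i)) (BDT.mem_path_of_follow_update_ne (hT i))
  calc ECand c (outcomeProb p x) π
      = sequentialCost c (outcomeProb p x) (List.ofFn π) :=
        sum_mul_prod_lt_eq_sequentialCost_ofFn c _ π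
    _ ≤ sequentialCost c (outcomeProb p x) (T.path x) :=
        sequentialCost_le_of_perm (fun i => outcomeProb_nonneg (hp i) x)
          (List.pairwise_ofFn.2 fun k k' hk => hπ k k' hk.le) hperm
    _ ≤ T.expCost c p := T.sequentialCost_path_le_expCost hc hp x

/-- Adaptivity does not help for the series (AND) function: the expected cost of any
binary decision tree that computes the AND function without repeated queries along any
path is at least the expected cost of the nonadaptive strategy testing in nondecreasing
order of `c i / q i`. -/
theorem series_adaptivity_does_not_help {n : ℕ} (hn : 0 < n) (c p : Fin n → ℝ)
    (hc : ∀ i, 0 < c i) (hp : ∀ i, 0 < p i ∧ p i < 1)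
    (T : BDT n) (hrep : T.noRepeats)
    (hT : ∀ x : Fin n → Bool, (T.follow x = true ↔ ∀ i, x i = true))
    (π : Equiv.Perm (Fin n))
    (hπ : ∀ k k' : Fin n, k ≤ k' →
      c (π k) * (1 - p (π k')) ≤ c (π k') * (1 - p (π k))) :
    ECand c p π ≤ T.expCost c p :=
  series_adaptivity_does_not_help_general (fun i => (hc i).le)
    (fun i => ⟨(hp i).1.le, (hp i).2.le⟩) (fun _ => true) (hrep.nodup_path _)
    (fun i h => by simpa using (hT _).1 (h.trans ((hT _).2 fun _ => rfl)) i) hπ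
end
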